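/- arXiv:math/9911117 — 6 statements merged into one kernel-verified Lean document; each statement's English description precedes it below -/
import Mathlib

section
/- Let V be a real vector space of finite dimension n > 4 and let Ω be a nondegenerate alternating bilinear form on V. Then the linear map sending an alternating 2-form α on V to the alternating 4-form α∧Ω is injective: if α∧Ω = 0 then α = 0. -/
/-!
Fix `x, y`. Since `dim V > 4`, some `u ≠ 0` is killed by the four functionals `Ω x`, `Ω y`, `α x`,
`α y`, and evaluating `α ∧ Ω = 0` on `x, y, u, v` leaves
`α x y * Ω u v + α u v * Ω x y = 0` for all `v`.

If `Ω x y = 0`, nondegeneracy gives `α x y = 0`; hence `α` vanishes on every `Ω`-orthogonal pair.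
If `Ω x y ≠ 0`, put `a = α x y / Ω x y`. The previous case shows `α x = a • Ω x`, while the displayed
identity says `α u = -a • Ω u`. As `α` vanishes on each pair `x + u, w` with `Ω (x + u) w = 0`, the
two factors `a` and `-a` must agree, so `a = 0`.
-/

/-- The hypothesis `4 < dim V` enters only here: four functionals have a common nonzero zero. -/
lemma exists_ne_zero_common_zero_four {V : Type*} [AddCommGroup V] [Module ℝ V]
    [FiniteDimensional ℝ V] (hdim : 4 < Module.finrank ℝ V) (f g h k : V →ₗ[ℝ] ℝ) :
    ∃ u : V, u ≠ 0 ∧ f u = 0 ∧ g u = 0 ∧ h u = 0 ∧ k u = 0 := by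
  have hker : LinearMap.ker (f.prod (g.prod (h.prod k))) ≠ ⊥ :=
    LinearMap.ker_ne_bot_of_finrank_lt (by simpa using hdim)
  obtain ⟨u, hu, hu0⟩ := (Submodule.ne_bot_iff _).1 hker
  refine ⟨u, hu0, ?_⟩
  simpa using hu

/-- If `dim V = n > 4` and `Ω` is a nondegenerate alternating bilinear form on
`V`, then wedging an alternating 2-form `α` with `Ω` is injective:
`α ∧ Ω = 0` implies `α = 0`. -/
theorem wedge_with_symplectic_injective_on_two_forms
    (V : Type*) [AddCommGroup V] [Module ℝ V] [FiniteDimensional ℝ V]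
    (hdim : 4 < Module.finrank ℝ V)
    (Ω : V →ₗ[ℝ] V →ₗ[ℝ] ℝ) (haltΩ : ∀ v : V, Ω v v = 0)
    (hnd : ∀ v : V, (∀ w : V, Ω v w = 0) → v = 0)
    (α : V →ₗ[ℝ] V →ₗ[ℝ] ℝ) (haltα : ∀ v : V, α v v = 0)
    (hwedge : ∀ x₁ x₂ x₃ x₄ : V,
        α x₁ x₂ * Ω x₃ x₄ - α x₁ x₃ * Ω x₂ x₄ + α x₁ x₄ * Ω x₂ x₃
        + α x₂ x₃ * Ω x₁ x₄ - α x₂ x₄ * Ω x₁ x₃ + α x₃ x₄ * Ω x₁ x₂ = 0) :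
    α = 0 := by
  have key : ∀ x y : V, ∃ u v : V, Ω u v ≠ 0 ∧ Ω u y = 0 ∧
      α x y * Ω u v + α u v * Ω x y = 0 := by
    intro x y
    obtain ⟨u, hu, h1, h2, h3, h4⟩ :=
      exists_ne_zero_common_zero_four hdim (Ω x) (Ω y) (α x) (α y)
    obtain ⟨v, hv⟩ : ∃ v, Ω u v ≠ 0 := by
      by_contra! hcon
      exact hu (hnd u hcon)
    refine ⟨u, v, hv, by rw [← LinearMap.IsAlt.neg haltΩ y u, h2, neg_zero], ?_⟩
    have hw := hwedge x y u v
    rw [h1, h2, h3, h4] at hw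
    linarith
  have orth : ∀ x y : V, Ω x y = 0 → α x y = 0 := by
    intro x y hxy
    obtain ⟨u, v, hv, -, h⟩ := key x y
    simpa [hxy, hv] using h
  ext x y
  by_cases hxy : Ω x y = 0
  · simpa using orth x y hxy
  obtain ⟨u, v, hv, huy, h⟩ := key x y
  have huy' : α u y = 0 := orth u y huy
  -- `α x` is proportional to `Ω x`: apply `orth` to the `Ω x`-orthogonal part of `v`.
  have hprop : Ω x y * α x v = Ω x v * α x y := by
    have := orth x (Ω x y • v - Ω x v • y) (by simp; ring)
    simp only [map_sub, map_smul, smul_eq_mul] at this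
    linarith
  -- The second vector is the combination of `y` and `v` that is `Ω`-orthogonal to `x + u`.
  have hsum := orth (x + u) ((Ω u v + Ω x v) • y - Ω x y • v)
    (by simp [huy]; ring)
  simp only [map_sub, map_smul, smul_eq_mul, map_add, LinearMap.add_apply, huy'] at hsum
  have h2 : α x y * Ω u v = 0 := by linarith
  simpa [hv] using h2
end

section
/- Let a, b, c ∈ ℝ and let U = {(x,y,z) ∈ ℝ³ : a·z² + b·z + c > 0 and 1 + a·(x² + y²) > 0}. Define u : U → ℝ by u(x,y,z) = log( 4·(a·z² + b·z + c) / (1 + a·(x² + y²))² ). Then u satisfies the SU(∞) Toda field equation u_xx + u_yy + (e^u)_zz = 0 on U. -/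
/-!
With `P = az² + bz + c` and `D = 1 + a(x² + y²)`, both positive near the given point,
`u = log (4P) - 2 log D`. Hence `u_x = -4ax/D` and `u_xx = -4a/D + 8a²x²/D²`, and symmetrically
in `y`, so `u_xx + u_yy = -8a/D²`. Since `e^u = 4P/D²`, also `(e^u)_zz = 8a/D²`.
-/

/-- The function `u(x,y,z) = log(4(az² + bz + c)/(1 + a(x² + y²))²)`. -/
noncomputable def todaConstCurv (a b c : ℝ) (x y z : ℝ) : ℝ :=
  Real.log (4 * (a * z ^ 2 + b * z + c) / (1 + a * (x ^ 2 + y ^ 2)) ^ 2)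

/-- The formula for `u_xx`; the one for `u_yy` follows because `u` is symmetric in `x` and `y`. -/
lemma todaConstCurv_deriv_deriv_fst (a b c x y z : ℝ)
    (h1 : 0 < a * z ^ 2 + b * z + c) (h2 : 0 < 1 + a * (x ^ 2 + y ^ 2)) :
    deriv (deriv (fun t => todaConstCurv a b c t y z)) x
      = -4 * a / (1 + a * (x ^ 2 + y ^ 2))
        + 8 * a ^ 2 * x ^ 2 / (1 + a * (x ^ 2 + y ^ 2)) ^ 2 := by
  have hD : ∀ t : ℝ, HasDerivAt (fun t : ℝ => 1 + a * (t ^ 2 + y ^ 2)) (2 * a * t) t := by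
    intro t
    have h := ((((hasDerivAt_id t).pow 2).add_const (y ^ 2)).const_mul a).const_add 1
    refine HasDerivAt.congr_deriv h ?_
    simp
    ring
  have hpos : ∀ᶠ t in nhds x, 0 < 1 + a * (t ^ 2 + y ^ 2) :=
    (hD x).continuousAt.eventually (lt_mem_nhds h2)
  have hfirst : deriv (fun t => todaConstCurv a b c t y z)
      =ᶠ[nhds x] fun t => -4 * a * t / (1 + a * (t ^ 2 + y ^ 2)) := by
    filter_upwards [hpos.eventually_nhds] with t ht
    have hlog : (fun t => todaConstCurv a b c t y z) =ᶠ[nhds t]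
        fun t => Real.log (4 * (a * z ^ 2 + b * z + c))
          - 2 * Real.log (1 + a * (t ^ 2 + y ^ 2)) := by
      filter_upwards [ht] with s hs
      rw [todaConstCurv, Real.log_div (by positivity) (by positivity), Real.log_pow]
      norm_num
    rw [hlog.deriv_eq]
    have h := (((hD t).log ht.self_of_nhds.ne').const_mul 2).const_sub
      (Real.log (4 * (a * z ^ 2 + b * z + c)))
    rw [h.deriv]
    ring
  rw [hfirst.deriv_eq]
  have h := ((hasDerivAt_id x).const_mul (-4 * a)).div (hD x) h2.ne'
  refine (HasDerivAt.deriv h).trans ?_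
  simp only [id]
  field_simp
  ring

lemma todaConstCurv_deriv_deriv_exp (a b c x y z : ℝ)
    (h1 : 0 < a * z ^ 2 + b * z + c) (h2 : 0 < 1 + a * (x ^ 2 + y ^ 2)) :
    deriv (deriv (fun t => Real.exp (todaConstCurv a b c x y t))) z
      = 8 * a / (1 + a * (x ^ 2 + y ^ 2)) ^ 2 := by
  set D := 1 + a * (x ^ 2 + y ^ 2) with hDdef
  have hP : ∀ t : ℝ, HasDerivAt (fun t : ℝ => 4 * (a * t ^ 2 + b * t + c) / D ^ 2)
      (4 * (2 * a * t + b) / D ^ 2) t := by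
    intro t
    have h := ((((((hasDerivAt_id t).pow 2).const_mul a).add
      ((hasDerivAt_id t).const_mul b)).add_const c).const_mul 4).div_const (D ^ 2)
    refine HasDerivAt.congr_deriv h ?_
    simp
    ring
  have hcont : Continuous fun t : ℝ => a * t ^ 2 + b * t + c := by fun_prop
  have hpos : ∀ᶠ t in nhds z, 0 < a * t ^ 2 + b * t + c :=
    hcont.continuousAt.eventually (lt_mem_nhds h1)
  have hexp : (fun t => Real.exp (todaConstCurv a b c x y t)) =ᶠ[nhds z]
      fun t => 4 * (a * t ^ 2 + b * t + c) / D ^ 2 := by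
    filter_upwards [hpos] with t ht
    rw [todaConstCurv, Real.exp_log (by positivity)]
  rw [hexp.deriv.deriv_eq, funext fun t => (hP t).deriv]
  have h := ((((hasDerivAt_id z).const_mul (2 * a)).add_const b).const_mul 4).div_const (D ^ 2)
  refine (HasDerivAt.deriv h).trans ?_
  ring

/-- On the open set where `az² + bz + c > 0` and `1 + a(x² + y²) > 0`, the
function `u(x,y,z) = log(4(az² + bz + c)/(1 + a(x² + y²))²)` satisfies the
SU(∞) Toda field equation `u_xx + u_yy + (e^u)_zz = 0`. -/
theorem todaConstCurv_solves_toda (a b c : ℝ) (x y z : ℝ)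
    (h1 : 0 < a * z ^ 2 + b * z + c) (h2 : 0 < 1 + a * (x ^ 2 + y ^ 2)) :
    deriv (deriv (fun t => todaConstCurv a b c t y z)) x
      + deriv (deriv (fun t => todaConstCurv a b c x t z)) y
      + deriv (deriv (fun t => Real.exp (todaConstCurv a b c x y t))) z = 0 := by
  have hsymm : (fun t => todaConstCurv a b c x t z) = fun t => todaConstCurv a b c t x z := by
    funext t
    simp only [todaConstCurv, add_comm (x ^ 2)]
  have h2' : 0 < 1 + a * (y ^ 2 + x ^ 2) := by rwa [add_comm (y ^ 2)]
  rw [hsymm, todaConstCurv_deriv_deriv_fst a b c x y z h1 h2,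
    todaConstCurv_deriv_deriv_fst a b c y x z h1 h2',
    todaConstCurv_deriv_deriv_exp a b c x y z h1 h2, add_comm (y ^ 2)]
  field_simp
  ring
end

section
/- Let a, b, c ∈ ℝ, let U ⊆ ℝ² be open, and let I ⊆ ℝ be an open interval on which a·z² + b·z + c > 0. Suppose v : U → ℝ is twice continuously differentiable and satisfies the Liouville equation v_xx + v_yy + 2a·e^v = 0 on U. Define u(x,y,z) = v(x,y) + log(a·z² + b·z + c) on U × I. Then u satisfies the SU(∞) Toda field equation u_xx + u_yy + (e^u)_zz = 0 on U × I. -/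
/-! The term `log (a z² + b z + c)` does not depend on `x, y`, so `u` and `v` have the same
second derivatives in `x` and `y`. Where the quadratic is positive,
`e^u = e^v (a z² + b z + c)`, whose second derivative in `z` is `2 a e^v`. The Toda equation
for `u` at `(x, y, z)` is therefore the Liouville equation for `v` at `(x, y)`. -/

/-- If `v` is a C² solution of the Liouville equation `v_xx + v_yy + 2a e^v = 0`
on an open set `U ⊆ ℝ²` and `az² + bz + c > 0` on the open interval `(p, q)`,
then `u(x,y,z) = v(x,y) + log(az² + bz + c)` satisfies the SU(∞) Toda field
equation `u_xx + u_yy + (e^u)_zz = 0` on `U × (p, q)`. -/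
theorem liouville_to_toda (a b c : ℝ) (U : Set (ℝ × ℝ)) (hU : IsOpen U)
    (p q : ℝ) (hpq : ∀ z ∈ Set.Ioo p q, 0 < a * z ^ 2 + b * z + c)
    (v : ℝ × ℝ → ℝ) (hv : ContDiffOn ℝ 2 v U)
    (hLiouville : ∀ w ∈ U,
      deriv (deriv (fun t => v (t, w.2))) w.1
        + deriv (deriv (fun t => v (w.1, t))) w.2
        + 2 * a * Real.exp (v w) = 0)
    (x y z : ℝ) (hxy : (x, y) ∈ U) (hz : z ∈ Set.Ioo p q) :
    deriv (deriv (fun t => v (t, y) + Real.log (a * z ^ 2 + b * z + c))) x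
      + deriv (deriv (fun t => v (x, t) + Real.log (a * z ^ 2 + b * z + c))) y
      + deriv (deriv (fun t =>
          Real.exp (v (x, y) + Real.log (a * t ^ 2 + b * t + c)))) z = 0 := by
  -- Near `z` the quadratic is positive, so the exponential of its logarithm is itself.
  have hexp : (fun t => Real.exp (v (x, y) + Real.log (a * t ^ 2 + b * t + c)))
      =ᶠ[nhds z] fun t => Real.exp (v (x, y)) * (a * t ^ 2 + b * t + c) := by
    filter_upwards [isOpen_Ioo.mem_nhds hz] with t ht
    rw [Real.exp_add, Real.exp_log (hpq t ht)]
  have hfirst : deriv (fun t => Real.exp (v (x, y)) * (a * t ^ 2 + b * t + c))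
      = fun t => Real.exp (v (x, y)) * (2 * a * t + b) := by
    funext t
    have h := (((((hasDerivAt_id t).pow 2).const_mul a).add
      ((hasDerivAt_id t).const_mul b)).add_const c).const_mul (Real.exp (v (x, y)))
    refine (h.congr_deriv ?_).deriv
    simp
    ring
  have hsecond : deriv (fun t => Real.exp (v (x, y)) * (2 * a * t + b)) z
      = 2 * a * Real.exp (v (x, y)) := by
    have h := (((hasDerivAt_id z).const_mul (2 * a)).add_const b).const_mul
      (Real.exp (v (x, y)))
    refine (h.congr_deriv ?_).deriv
    ring
  rw [hexp.deriv.deriv_eq, hfirst, hsecond, deriv_add_const', deriv_add_const']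
  exact hLiouville (x, y) hxy
end

section
/- Let U ⊆ ℂ be open and h : U → ℂ holomorphic. Let Ω = {(x,y,z) ∈ ℝ³ : x + iy ∈ U and (z + Re h(x+iy))² + (Im h(x+iy))² > 0}. Define u : Ω → ℝ by u(x,y,z) = log( 4·((z + Re h(x+iy))² + (Im h(x+iy))²) / (1 + x² + y²)² ). Then u satisfies the SU(∞) Toda field equation u_xx + u_yy + (e^u)_zz = 0 on Ω. -/
/-!
Put `F = z + h`, holomorphic on `U`, so that `u = log 4 + log |F|² - 2 log (1 + x² + y²)` wherever
`F ≠ 0`. Along a line `p` with constant velocity `c`, the second derivative of `log |F ∘ p|²` is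
`2 Re (c² (F'/F)')`; the contributions of `c = 1` and `c = i` cancel (`log |F|²` is harmonic), so
`u_xx + u_yy = -8 / (1 + x² + y²)²`. On the other hand `e^u` is the quadratic polynomial
`4 ((z + Re h)² + (Im h)²) / (1 + x² + y²)²` in `z`, whose second derivative is
`8 / (1 + x² + y²)²`. The second derivative along a line is computed in `deriv_deriv_log_line`.
-/

/-- The function `u(x,y,z) = log(4((z + Re h(x+iy))² + (Im h(x+iy))²)/(1+x²+y²)²)`
associated to a holomorphic function `h`. -/
noncomputable def todaFromHolomorphic (h : ℂ → ℂ) (x y z : ℝ) : ℝ :=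
  Real.log (4 * ((z + (h ((x : ℂ) + (y : ℂ) * Complex.I)).re) ^ 2
      + ((h ((x : ℂ) + (y : ℂ) * Complex.I)).im) ^ 2)
    / (1 + x ^ 2 + y ^ 2) ^ 2)

lemma hasDerivAt_log_normSq {f : ℝ → ℂ} {f' : ℂ} {t : ℝ} (hf : HasDerivAt f f' t)
    (h0 : f t ≠ 0) :
    HasDerivAt (fun s => Real.log (Complex.normSq (f s))) (2 * (f' / f t).re) t := by
  have hre : HasDerivAt (fun s => (f s).re) f'.re t :=
    Complex.reCLM.hasFDerivAt.comp_hasDerivAt t hf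
  have him : HasDerivAt (fun s => (f s).im) f'.im t :=
    Complex.imCLM.hasFDerivAt.comp_hasDerivAt t hf
  have hn : Complex.normSq (f t) ≠ 0 := by simpa using h0
  have hsq : HasDerivAt (fun s => Complex.normSq (f s))
      (f'.re * (f t).re + (f t).re * f'.re + (f'.im * (f t).im + (f t).im * f'.im)) t := by
    simpa only [Complex.normSq_apply] using (hre.fun_mul hre).fun_add (him.fun_mul him)
  convert hsq.log hn using 1
  rw [Complex.div_re]
  field_simp
  ring

/-- The second derivative of `u` along a coordinate line of the `ζ`-plane: `p` parametrises the
line, with velocity `c`, and `s` is `1` plus the square of the coordinate held fixed. -/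
lemma deriv_deriv_log_line {U : Set ℂ} (hU : IsOpen U) {F : ℂ → ℂ} (hF : DifferentiableOn ℂ F U)
    {p : ℝ → ℂ} {c : ℂ} (hp : ∀ t, HasDerivAt p c t) {t₀ : ℝ} (hmem : p t₀ ∈ U)
    (h0 : F (p t₀) ≠ 0) {s : ℝ} (hs : 0 < s) :
    deriv (deriv fun t => Real.log (4 * Complex.normSq (F (p t)) / (s + t ^ 2) ^ 2)) t₀
      = 2 * (c ^ 2 * deriv (fun w => deriv F w / F w) (p t₀)).re
        - 4 * (s - t₀ ^ 2) / (s + t₀ ^ 2) ^ 2 := by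
  have hpos : ∀ t : ℝ, s + t ^ 2 ≠ 0 := fun t => by positivity
  have hquad : ∀ t : ℝ, HasDerivAt (fun t : ℝ => s + t ^ 2) (2 * t) t := fun t => by
    simpa using (hasDerivAt_pow 2 t).const_add s
  have hev : ∀ᶠ t in nhds t₀, p t ∈ U ∧ F (p t) ≠ 0 := by
    have hFc : ContinuousAt F (p t₀) := (hF.differentiableAt (hU.mem_nhds hmem)).continuousAt
    exact (hp t₀).continuousAt.eventually
      ((hU.eventually_mem hmem).and (hFc.eventually_ne h0))
  have hFp : ∀ t, p t ∈ U → HasDerivAt (fun t => F (p t)) (c * deriv F (p t)) t := fun t ht =>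
    (hF.differentiableAt (hU.mem_nhds ht)).hasDerivAt.scomp t (hp t)
  have hfirst : deriv (fun t => Real.log (4 * Complex.normSq (F (p t)) / (s + t ^ 2) ^ 2))
      =ᶠ[nhds t₀] fun t =>
        2 * (c * (deriv F (p t) / F (p t))).re - 2 * (2 * t / (s + t ^ 2)) := by
    filter_upwards [hev.eventually_nhds] with t ht
    obtain ⟨htU, ht0⟩ := ht.self_of_nhds
    have hsplit : (fun t => Real.log (4 * Complex.normSq (F (p t)) / (s + t ^ 2) ^ 2))
        =ᶠ[nhds t] fun t =>
          Real.log 4 + Real.log (Complex.normSq (F (p t))) - 2 * Real.log (s + t ^ 2) := by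
      filter_upwards [ht] with r hr
      have hn : Complex.normSq (F (p r)) ≠ 0 := by simpa using hr.2
      rw [Real.log_div (by simpa using hn) (pow_ne_zero 2 (hpos r)),
        Real.log_mul (by norm_num) hn, Real.log_pow]
      norm_num
    rw [hsplit.deriv_eq]
    have hd := ((hasDerivAt_log_normSq (hFp t htU) ht0).const_add (Real.log 4)).fun_sub
      (((hquad t).log (hpos t)).const_mul 2)
    rw [hd.deriv, mul_div_assoc]
  rw [hfirst.deriv_eq]
  have hk : DifferentiableAt ℂ (fun w => deriv F w / F w) (p t₀) :=
    ((hF.deriv hU).differentiableAt (hU.mem_nhds hmem)).fun_div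
      (hF.differentiableAt (hU.mem_nhds hmem)) h0
  have hkp : HasDerivAt (fun t => deriv F (p t) / F (p t))
      (c * deriv (fun w => deriv F w / F w) (p t₀)) t₀ :=
    hk.hasDerivAt.scomp t₀ (hp t₀)
  have hre : HasDerivAt (fun t => (c * (deriv F (p t) / F (p t))).re)
      (c * (c * deriv (fun w => deriv F w / F w) (p t₀))).re t₀ :=
    Complex.reCLM.hasFDerivAt.comp_hasDerivAt t₀ (hkp.const_mul c)
  have hq : HasDerivAt (fun t : ℝ => 2 * t / (s + t ^ 2))
      ((2 * (s + t₀ ^ 2) - 2 * t₀ * (2 * t₀)) / (s + t₀ ^ 2) ^ 2) t₀ := by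
    have h2 : HasDerivAt (fun t : ℝ => 2 * t) 2 t₀ := by
      simpa using (hasDerivAt_id t₀).const_mul (2 : ℝ)
    exact h2.fun_div (hquad t₀) (hpos t₀)
  rw [((hre.const_mul 2).fun_sub (hq.const_mul 2)).deriv, ← mul_assoc, ← sq]
  ring

/-- If `h` is holomorphic on an open set `U ⊆ ℂ`, then
`u(x,y,z) = log(4((z + Re h(x+iy))² + (Im h(x+iy))²)/(1+x²+y²)²)` satisfies
the SU(∞) Toda field equation `u_xx + u_yy + (e^u)_zz = 0` on the set where
`x + iy ∈ U` and `(z + Re h(x+iy))² + (Im h(x+iy))² > 0`. -/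
theorem todaFromHolomorphic_solves_toda (U : Set ℂ) (hU : IsOpen U)
    (h : ℂ → ℂ) (hh : DifferentiableOn ℂ h U)
    (x y z : ℝ) (hmem : ((x : ℂ) + (y : ℂ) * Complex.I) ∈ U)
    (hpos : 0 < (z + (h ((x : ℂ) + (y : ℂ) * Complex.I)).re) ^ 2
        + ((h ((x : ℂ) + (y : ℂ) * Complex.I)).im) ^ 2) :
    deriv (deriv (fun t => todaFromHolomorphic h t y z)) x
      + deriv (deriv (fun t => todaFromHolomorphic h x t z)) y
      + deriv (deriv (fun t => Real.exp (todaFromHolomorphic h x y t))) z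
      = 0 := by
  have hF : DifferentiableOn ℂ (fun w => (z : ℂ) + h w) U := hh.const_add _
  have hnorm : ∀ w : ℂ, Complex.normSq ((z : ℂ) + w) = (z + w.re) ^ 2 + w.im ^ 2 := fun w => by
    simp [Complex.normSq_apply, sq]
  have h0 : (z : ℂ) + h ((x : ℂ) + (y : ℂ) * Complex.I) ≠ 0 := by
    rw [← Complex.normSq_pos, hnorm]
    exact hpos
  have hofReal : ∀ t : ℝ, HasDerivAt (fun t : ℝ => (t : ℂ)) 1 t := fun t =>
    (hasDerivAt_id t).ofReal_comp
  have hxx := deriv_deriv_log_line hU hF (p := fun t : ℝ => (t : ℂ) + (y : ℂ) * Complex.I) (c := 1)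
    (fun t => (hofReal t).add_const _) (t₀ := x) hmem h0 (s := 1 + y ^ 2) (by positivity)
  have hyy := deriv_deriv_log_line hU hF (p := fun t : ℝ => (x : ℂ) + (t : ℂ) * Complex.I)
    (c := Complex.I)
    (fun t => by simpa using ((hofReal t).mul_const Complex.I).const_add (x : ℂ))
    (t₀ := y) hmem h0 (s := 1 + x ^ 2) (by positivity)
  have hzz : deriv (deriv (fun t => Real.exp (todaFromHolomorphic h x y t))) z
      = 8 / (1 + x ^ 2 + y ^ 2) ^ 2 := by
    unfold todaFromHolomorphic
    generalize h ((x : ℂ) + (y : ℂ) * Complex.I) = w at hpos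
    have hD : 0 < 1 + x ^ 2 + y ^ 2 := by positivity
    have hcont : Continuous fun t : ℝ => (t + w.re) ^ 2 + w.im ^ 2 := by fun_prop
    have hexp : (fun t => Real.exp (Real.log
        (4 * ((t + w.re) ^ 2 + w.im ^ 2) / (1 + x ^ 2 + y ^ 2) ^ 2)))
        =ᶠ[nhds z] fun t => 4 * ((t + w.re) ^ 2 + w.im ^ 2) / (1 + x ^ 2 + y ^ 2) ^ 2 := by
      filter_upwards [hcont.continuousAt.eventually_const_lt hpos] with t ht
      exact Real.exp_log (by positivity)
    have hlin : ∀ t : ℝ, HasDerivAt (fun t : ℝ => t + w.re) 1 t := fun t =>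
      (hasDerivAt_id t).add_const _
    have hd : deriv (fun t => 4 * ((t + w.re) ^ 2 + w.im ^ 2) / (1 + x ^ 2 + y ^ 2) ^ 2)
        = fun t => 4 * (2 * (t + w.re)) / (1 + x ^ 2 + y ^ 2) ^ 2 := by
      funext t
      simpa using (((((hlin t).fun_pow 2).add_const (w.im ^ 2)).const_mul 4).div_const
        ((1 + x ^ 2 + y ^ 2) ^ 2)).deriv
    rw [hexp.deriv.deriv_eq, hd,
      ((((hlin z).const_mul 2).const_mul 4).div_const ((1 + x ^ 2 + y ^ 2) ^ 2)).deriv]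
    norm_num
  have ex : (fun t => todaFromHolomorphic h t y z) = fun t : ℝ => Real.log
      (4 * Complex.normSq ((z : ℂ) + h ((t : ℂ) + (y : ℂ) * Complex.I))
        / (1 + y ^ 2 + t ^ 2) ^ 2) := by
    funext t
    rw [hnorm, todaFromHolomorphic, add_right_comm]
  have ey : (fun t => todaFromHolomorphic h x t z) = fun t : ℝ => Real.log
      (4 * Complex.normSq ((z : ℂ) + h ((x : ℂ) + (t : ℂ) * Complex.I))
        / (1 + x ^ 2 + t ^ 2) ^ 2) := by
    funext t
    rw [hnorm, todaFromHolomorphic]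
  rw [ex, ey, hzz, hxx, hyy, Complex.I_sq, one_pow, one_mul, neg_one_mul, Complex.neg_re,
    add_right_comm 1 (y ^ 2) (x ^ 2)]
  have hD : 1 + x ^ 2 + y ^ 2 ≠ 0 := by positivity
  field_simp
  ring
end

section
/- Let U ⊆ ℝ³ be open and let u : U → ℝ be smooth (C^∞) and satisfy the SU(∞) Toda field equation u_xx + u_yy + (e^u)_zz = 0 on U. Then for all a, b ∈ ℝ, the function V(x,y,z) = a·(1 − (1/2)·z·u_z(x,y,z)) + (1/2)·b·u_z(x,y,z) satisfies the generalized monopole equation V_xx + V_yy + (e^u·V)_zz = 0 on U. -/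
/-!
Put `E = e^u` and `c = (b - a z) / 2`, so that `V = a + c u_z` and `e^u V = a E + c E_z`.
Since `c` depends on `z` only and `2 c_z = -a`,

  `V_xx + V_yy = c (u_xx + u_yy)_z` and `(e^u V)_zz = a E_zz + c E_zzz - a E_zz = c E_zzz`,

and the sum is `c` times the `z`-derivative of the Toda equation.

The computation is done with directional derivatives `dirDeriv v` of functions smooth on `U`.
`deriv_deriv_curve` translates the second derivatives along coordinate lines, `dirDeriv_comm`
is the symmetry of mixed derivatives, and `dirDeriv_dirDeriv_affine` is the Leibniz
computation covering both `V` and `e^u V`.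
-/

/-- The monopole `V = a(1 − ½ z u_z) + ½ b u_z` associated to a solution `u`
of the SU(∞) Toda field equation. -/
noncomputable def todaMonopole (u : ℝ × ℝ × ℝ → ℝ) (a b : ℝ) (x y z : ℝ) : ℝ :=
  a * (1 - (1 / 2) * z * deriv (fun t => u (x, y, t)) z)
    + (1 / 2) * b * deriv (fun t => u (x, y, t)) z

section DirDeriv

variable {F : Type*} [NormedAddCommGroup F] [NormedSpace ℝ F]

/-- The derivative of `f` in the constant direction `v`, as a function of the base point. -/
noncomputable def dirDeriv (v : F) (f : F → ℝ) (p : F) : ℝ := fderiv ℝ f p v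

lemma dirDeriv_congr {U : Set F} (hU : IsOpen U) {f g : F → ℝ} (h : ∀ q ∈ U, f q = g q)
    (v : F) {p : F} (hp : p ∈ U) : dirDeriv v f p = dirDeriv v g p := by
  have : f =ᶠ[nhds p] g := Filter.eventuallyEq_of_mem (hU.mem_nhds hp) h
  simp only [dirDeriv, this.fderiv_eq]

lemma differentiableAt_of_smoothOn {U : Set F} (hU : IsOpen U) {f : F → ℝ}
    (hf : ContDiffOn ℝ (⊤ : ℕ∞) f U) {p : F} (hp : p ∈ U) : DifferentiableAt ℝ f p :=
  (hf.contDiffAt (hU.mem_nhds hp)).differentiableAt (by simp)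

lemma contDiffOn_dirDeriv {U : Set F} (hU : IsOpen U) {f : F → ℝ}
    (hf : ContDiffOn ℝ (⊤ : ℕ∞) f U) (v : F) : ContDiffOn ℝ (⊤ : ℕ∞) (dirDeriv v f) U :=
  (hf.fderiv_of_isOpen hU (by simp)).clm_apply contDiffOn_const

lemma dirDeriv_comm {U : Set F} (hU : IsOpen U) {f : F → ℝ}
    (hf : ContDiffOn ℝ (⊤ : ℕ∞) f U) (v w : F) {p : F} (hp : p ∈ U) :
    dirDeriv v (dirDeriv w f) p = dirDeriv w (dirDeriv v f) p := by
  have hd : DifferentiableAt ℝ (fderiv ℝ f) p :=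
    ((hf.fderiv_of_isOpen (m := 1) hU (by norm_cast)).contDiffAt
      (hU.mem_nhds hp)).differentiableAt (by simp)
  have key : ∀ v w : F, dirDeriv v (dirDeriv w f) p = fderiv ℝ (fderiv ℝ f) p v w := by
    intro v w
    have h := hd.hasFDerivAt.clm_apply (hasFDerivAt_const w p)
    have h' : fderiv ℝ (dirDeriv w f) p = _ := h.fderiv
    simp [dirDeriv, h']
  rw [key, key]
  exact (hf.contDiffAt (hU.mem_nhds hp)).isSymmSndFDerivAt
    (by simp only [minSmoothness_of_isRCLikeNormedField]; exact WithTop.coe_le_coe.2 (le_top : (2 : ℕ∞) ≤ ⊤)) v w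

/-- The function `g` need only agree with `f` along the part of the line `γ` lying in `U`. -/
lemma deriv_deriv_curve {U : Set F} (hU : IsOpen U) {f : F → ℝ}
    (hf : ContDiffOn ℝ (⊤ : ℕ∞) f U) {γ : ℝ → F} {v : F} (hγ : ∀ t, HasDerivAt γ v t)
    {g : ℝ → ℝ} (hg : ∀ s, γ s ∈ U → g s = f (γ s)) {t : ℝ} (ht : γ t ∈ U) :
    deriv g t = dirDeriv v f (γ t) ∧
      deriv (deriv g) t = dirDeriv v (dirDeriv v f) (γ t) := by
  have hO : IsOpen (γ ⁻¹' U) :=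
    hU.preimage (continuous_iff_continuousAt.2 fun s => (hγ s).continuousAt)
  have step : ∀ (f : F → ℝ) (g : ℝ → ℝ), ContDiffOn ℝ (⊤ : ℕ∞) f U →
      (∀ s, γ s ∈ U → g s = f (γ s)) → ∀ s, γ s ∈ U → deriv g s = dirDeriv v f (γ s) := by
    intro f g hf hg s hs
    have he : g =ᶠ[nhds s] f ∘ γ := Filter.eventuallyEq_of_mem (hO.mem_nhds hs) hg
    rw [he.deriv_eq]
    exact ((differentiableAt_of_smoothOn hU hf hs).hasFDerivAt.comp_hasDerivAt s (hγ s)).deriv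
  have h1 := step f g hf hg
  exact ⟨h1 t ht, step _ _ (contDiffOn_dirDeriv hU hf v) h1 t ht⟩

end DirDeriv

/-- The function `(b - a z) / 2`, the coefficient of `u_z` in the monopole. -/
noncomputable def monopoleCoeff (a b : ℝ) (p : ℝ × ℝ × ℝ) : ℝ := (b - a * p.2.2) / 2

lemma contDiff_monopoleCoeff (a b : ℝ) : ContDiff ℝ (⊤ : ℕ∞) (monopoleCoeff a b) := by
  unfold monopoleCoeff
  fun_prop

lemma contDiffOn_affine {U : Set (ℝ × ℝ × ℝ)} {h g : ℝ × ℝ × ℝ → ℝ}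
    (hh : ContDiffOn ℝ (⊤ : ℕ∞) h U) (hg : ContDiffOn ℝ (⊤ : ℕ∞) g U) (a b : ℝ) :
    ContDiffOn ℝ (⊤ : ℕ∞) (fun q => a * h q + monopoleCoeff a b q * g q) U :=
  (contDiffOn_const.mul hh).add ((contDiff_monopoleCoeff a b).contDiffOn.mul hg)

lemma dirDeriv_dirDeriv_affine {U : Set (ℝ × ℝ × ℝ)} (hU : IsOpen U)
    {h g : ℝ × ℝ × ℝ → ℝ} (hh : ContDiffOn ℝ (⊤ : ℕ∞) h U)
    (hg : ContDiffOn ℝ (⊤ : ℕ∞) g U) (a b : ℝ) (v : ℝ × ℝ × ℝ)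
    {p : ℝ × ℝ × ℝ} (hp : p ∈ U) :
    dirDeriv v (dirDeriv v (fun q => a * h q + monopoleCoeff a b q * g q)) p
      = a * dirDeriv v (dirDeriv v h) p
        + monopoleCoeff a b p * dirDeriv v (dirDeriv v g) p
        - a * v.2.2 * dirDeriv v g p := by
  have hc : ∀ q, HasFDerivAt (monopoleCoeff a b)
      ((-(a / 2)) • (ContinuousLinearMap.snd ℝ ℝ ℝ ∘L ContinuousLinearMap.snd ℝ ℝ (ℝ × ℝ))) q := by
    intro q
    have := ((-(a / 2)) • (ContinuousLinearMap.snd ℝ ℝ ℝ ∘L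
      ContinuousLinearMap.snd ℝ ℝ (ℝ × ℝ))).hasFDerivAt (x := q) |>.add_const (b / 2)
    refine this.congr_of_eventuallyEq (Filter.Eventually.of_forall fun r => ?_)
    simp [monopoleCoeff]
    ring
  have first : ∀ q ∈ U, dirDeriv v (fun q => a * h q + monopoleCoeff a b q * g q) q
      = a * dirDeriv v h q + monopoleCoeff a b q * dirDeriv v g q
        + (-(a / 2) * v.2.2) * g q := by
    intro q hq
    have h1 := (differentiableAt_of_smoothOn hU hh hq).hasFDerivAt
    have h2 := (differentiableAt_of_smoothOn hU hg hq).hasFDerivAt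
    have h3 := ((h1.const_mul a).add ((hc q).mul h2)).fderiv
    have h4 : fderiv ℝ (fun q => a * h q + monopoleCoeff a b q * g q) q = _ := h3
    simp [dirDeriv, h4]
    ring
  rw [dirDeriv_congr hU first v hp]
  have h1 := (differentiableAt_of_smoothOn hU (contDiffOn_dirDeriv hU hh v) hp).hasFDerivAt
  have h2 := (differentiableAt_of_smoothOn hU (contDiffOn_dirDeriv hU hg v) hp).hasFDerivAt
  have h0 := (differentiableAt_of_smoothOn hU hg hp).hasFDerivAt
  have h3 := (((h1.const_mul a).add ((hc p).mul h2)).add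
    (h0.const_mul (-(a / 2) * v.2.2))).fderiv
  have h4 : fderiv ℝ (fun q => a * dirDeriv v h q + monopoleCoeff a b q * dirDeriv v g q
        + (-(a / 2) * v.2.2) * g q) p = _ := h3
  rw [dirDeriv, h4]
  simp [dirDeriv]
  ring

/-- If `u` is a smooth solution of the SU(∞) Toda field equation
`u_xx + u_yy + (e^u)_zz = 0` on an open set `U ⊆ ℝ³`, then for all `a, b ∈ ℝ`
the function `V = a(1 − ½ z u_z) + ½ b u_z` satisfies the generalized monopole
equation `V_xx + V_yy + (e^u V)_zz = 0` on `U`. -/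
theorem todaMonopole_solves_monopole_equation
    (U : Set (ℝ × ℝ × ℝ)) (hU : IsOpen U)
    (u : ℝ × ℝ × ℝ → ℝ) (hu : ContDiffOn ℝ (⊤ : ℕ∞) u U)
    (hToda : ∀ w ∈ U,
      deriv (deriv (fun t => u (t, w.2.1, w.2.2))) w.1
        + deriv (deriv (fun t => u (w.1, t, w.2.2))) w.2.1
        + deriv (deriv (fun t => Real.exp (u (w.1, w.2.1, t)))) w.2.2 = 0)
    (a b : ℝ) (x y z : ℝ) (hmem : (x, y, z) ∈ U) :
    deriv (deriv (fun t => todaMonopole u a b t y z)) x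
      + deriv (deriv (fun t => todaMonopole u a b x t z)) y
      + deriv (deriv (fun t =>
          Real.exp (u (x, y, t)) * todaMonopole u a b x y t)) z = 0 := by
  set e₁ : ℝ × ℝ × ℝ := (1, 0, 0) with he₁
  set e₂ : ℝ × ℝ × ℝ := (0, 1, 0) with he₂
  set e₃ : ℝ × ℝ × ℝ := (0, 0, 1) with he₃
  have l₁ : ∀ y z t : ℝ, HasDerivAt (fun s : ℝ => (s, y, z)) e₁ t := fun y z t =>
    (hasDerivAt_id t).prodMk ((hasDerivAt_const t y).prodMk (hasDerivAt_const t z))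
  have l₂ : ∀ x z t : ℝ, HasDerivAt (fun s : ℝ => (x, s, z)) e₂ t := fun x z t =>
    (hasDerivAt_const t x).prodMk ((hasDerivAt_id t).prodMk (hasDerivAt_const t z))
  have l₃ : ∀ x y t : ℝ, HasDerivAt (fun s : ℝ => (x, y, s)) e₃ t := fun x y t =>
    (hasDerivAt_const t x).prodMk ((hasDerivAt_const t y).prodMk (hasDerivAt_id t))
  set E : ℝ × ℝ × ℝ → ℝ := fun q => Real.exp (u q) with hEdef
  have hE : ContDiffOn ℝ (⊤ : ℕ∞) E U := hu.exp
  have hD := contDiffOn_dirDeriv hU hu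
  have hDE := contDiffOn_dirDeriv hU hE
  have toda : ∀ q ∈ U, dirDeriv e₁ (dirDeriv e₁ u) q + dirDeriv e₂ (dirDeriv e₂ u) q
      + dirDeriv e₃ (dirDeriv e₃ E) q = 0 := by
    rintro ⟨x, y, z⟩ hq
    have h := hToda _ hq
    rwa [(deriv_deriv_curve hU hu (l₁ y z) (fun _ _ => rfl) hq).2,
      (deriv_deriv_curve hU hu (l₂ x z) (fun _ _ => rfl) hq).2,
      (deriv_deriv_curve hU hE (l₃ x y) (fun _ _ => rfl) hq).2] at h
  have todaz : dirDeriv e₃ (dirDeriv e₁ (dirDeriv e₁ u)) (x, y, z)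
      + dirDeriv e₃ (dirDeriv e₂ (dirDeriv e₂ u)) (x, y, z)
      + dirDeriv e₃ (dirDeriv e₃ (dirDeriv e₃ E)) (x, y, z) = 0 := by
    have d := fun {f : ℝ × ℝ × ℝ → ℝ} (hf : ContDiffOn ℝ (⊤ : ℕ∞) f U) (v : ℝ × ℝ × ℝ) =>
      (differentiableAt_of_smoothOn hU (contDiffOn_dirDeriv hU hf v) hmem).hasFDerivAt
    have h := dirDeriv_congr hU toda e₃ hmem
    have hs := (((d (hD e₁) e₁).add (d (hD e₂) e₂)).add (d (hDE e₃) e₃)).fderiv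
    have hs' : fderiv ℝ (fun q => dirDeriv e₁ (dirDeriv e₁ u) q + dirDeriv e₂ (dirDeriv e₂ u) q
      + dirDeriv e₃ (dirDeriv e₃ E) q) (x, y, z) = _ := hs
    rw [dirDeriv, hs'] at h
    simpa [dirDeriv] using h
  have hone : ContDiffOn ℝ (⊤ : ℕ∞) (fun _ : ℝ × ℝ × ℝ => (1 : ℝ)) U := contDiffOn_const
  have uz : ∀ x y z : ℝ, (x, y, z) ∈ U →
      deriv (fun t => u (x, y, t)) z = dirDeriv e₃ u (x, y, z) := fun x y z hq =>
    (deriv_deriv_curve hU hu (l₃ x y) (fun _ _ => rfl) hq).1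
  have hV : ∀ x y z : ℝ, (x, y, z) ∈ U → todaMonopole u a b x y z
      = a * 1 + monopoleCoeff a b (x, y, z) * dirDeriv e₃ u (x, y, z) := by
    intro x y z hq
    rw [todaMonopole, uz x y z hq, monopoleCoeff]
    ring
  have hEV : ∀ x y z : ℝ, (x, y, z) ∈ U → Real.exp (u (x, y, z)) * todaMonopole u a b x y z
      = a * E (x, y, z) + monopoleCoeff a b (x, y, z) * dirDeriv e₃ E (x, y, z) := by
    intro x y z hq
    have hexp : dirDeriv e₃ E (x, y, z) = E (x, y, z) * dirDeriv e₃ u (x, y, z) := by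
      simp [dirDeriv, hEdef, (differentiableAt_of_smoothOn hU hu hq).hasFDerivAt.exp.fderiv]
    rw [hV x y z hq, hexp]
    ring
  have hVs := contDiffOn_affine hone (hD e₃) a b
  have hEVs := contDiffOn_affine hE (hDE e₃) a b
  rw [(deriv_deriv_curve hU hVs (l₁ y z) (fun s hs => hV s y z hs) hmem).2,
    (deriv_deriv_curve hU hVs (l₂ x z) (fun s hs => hV x s z hs) hmem).2,
    (deriv_deriv_curve hU hEVs (l₃ x y) (fun s hs => hEV x y s hs) hmem).2,
    dirDeriv_dirDeriv_affine hU hone (hD e₃) a b e₁ hmem,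
    dirDeriv_dirDeriv_affine hU hone (hD e₃) a b e₂ hmem,
    dirDeriv_dirDeriv_affine hU hE (hDE e₃) a b e₃ hmem]
  have hconst : ∀ v : ℝ × ℝ × ℝ,
      dirDeriv v (dirDeriv v (fun _ : ℝ × ℝ × ℝ => (1 : ℝ))) (x, y, z) = 0 := by
    intro v
    have : dirDeriv v (fun _ : ℝ × ℝ × ℝ => (1 : ℝ)) = fun _ => 0 := by
      funext q
      simp [dirDeriv]
    rw [this]
    simp [dirDeriv]
  have swap : ∀ v : ℝ × ℝ × ℝ, dirDeriv v (dirDeriv v (dirDeriv e₃ u)) (x, y, z)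
      = dirDeriv e₃ (dirDeriv v (dirDeriv v u)) (x, y, z) := by
    intro v
    rw [dirDeriv_congr hU (fun q hq => dirDeriv_comm hU hu v e₃ hq) v hmem,
      dirDeriv_comm hU (hD v) v e₃ hmem]
  rw [hconst, hconst, swap, swap]
  simp only [he₁, he₂, he₃] at todaz ⊢
  linear_combination monopoleCoeff a b (x, y, z) * todaz
end

section
/- Let U ⊆ ℂ be open with 0 ∉ U, and let H : U → ℂ be holomorphic and nowhere vanishing. For ζ = x + iy ∈ U, write 1/(ζ·H(ζ)) = p(x,y) + i·q(x,y) with p, q real-valued, and define P(x,y) = −2·q(x,y)/(1 + x² + y²) and Q(x,y) = −2·p(x,y)/(1 + x² + y²). Then at every point of U, ∂Q/∂x − ∂P/∂y = 4·Re(1/H(x+iy)) / (1 + x² + y²)². -/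
/-!
With `F(ζ) = 1/(ζ H(ζ)) = p + iq` holomorphic near the point and `D = 1 + x² + y²`, the
Cauchy–Riemann equation `∂p/∂x = ∂q/∂y` (both are `Re F'`) cancels the terms of
`∂Q/∂x − ∂P/∂y` in which `F` is differentiated. What remains comes from differentiating `1/D`,
and equals `4 (x p − y q)/D² = 4 Re(ζ F)/D² = 4 Re(1/H)/D²`.
-/

/-- `P(x,y) = −2 q(x,y)/(1 + x² + y²)` where `q = Im (1/(ζ H(ζ)))`, `ζ = x+iy`. -/
noncomputable def betaP (H : ℂ → ℂ) (x y : ℝ) : ℝ :=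
  -2 * (1 / (((x : ℂ) + (y : ℂ) * Complex.I)
      * H ((x : ℂ) + (y : ℂ) * Complex.I))).im / (1 + x ^ 2 + y ^ 2)

/-- `Q(x,y) = −2 p(x,y)/(1 + x² + y²)` where `p = Re (1/(ζ H(ζ)))`, `ζ = x+iy`. -/
noncomputable def betaQ (H : ℂ → ℂ) (x y : ℝ) : ℝ :=
  -2 * (1 / (((x : ℂ) + (y : ℂ) * Complex.I)
      * H ((x : ℂ) + (y : ℂ) * Complex.I))).re / (1 + x ^ 2 + y ^ 2)

/-- For `H` holomorphic and nonvanishing on an open set `U ⊆ ℂ` with `0 ∉ U`,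
writing `1/(ζH(ζ)) = p + iq`, `P = −2q/(1+x²+y²)`, `Q = −2p/(1+x²+y²)`, one has
`∂Q/∂x − ∂P/∂y = 4 Re(1/H(x+iy))/(1+x²+y²)²` at every point of `U`. -/
theorem geodesic_symmetry_beta_structure_equation
    (U : Set ℂ) (hU : IsOpen U) (h0 : (0 : ℂ) ∉ U)
    (H : ℂ → ℂ) (hH : DifferentiableOn ℂ H U) (hHne : ∀ ζ ∈ U, H ζ ≠ 0)
    (x y : ℝ) (hmem : ((x : ℂ) + (y : ℂ) * Complex.I) ∈ U) :
    deriv (fun t => betaQ H t y) x - deriv (fun t => betaP H x t) y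
      = 4 * (1 / H ((x : ℂ) + (y : ℂ) * Complex.I)).re
          / (1 + x ^ 2 + y ^ 2) ^ 2 := by
  set z : ℂ := (x : ℂ) + (y : ℂ) * Complex.I with hz
  have hz0 : z ≠ 0 := fun h => h0 (h ▸ hmem)
  have hHz : H z ≠ 0 := hHne z hmem
  have hD : (1 + x ^ 2 + y ^ 2 : ℝ) ≠ 0 := by positivity
  have hHd : DifferentiableAt ℂ H z := hH.differentiableAt (hU.mem_nhds hmem)
  have hFd : DifferentiableAt ℂ (fun ζ : ℂ => 1 / (ζ * H ζ)) z :=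
    (differentiableAt_const _).div (differentiableAt_id.mul hHd) (mul_ne_zero hz0 hHz)
  obtain ⟨F', hF⟩ : ∃ F', HasDerivAt (fun ζ : ℂ => 1 / (ζ * H ζ)) F' z := ⟨_, hFd.hasDerivAt⟩
  have hlineX : HasDerivAt (fun t : ℝ => (t : ℂ) + (y : ℂ) * Complex.I) 1 x :=
    (Complex.ofRealCLM.hasDerivAt (x := x)).add_const _
  have hlineY : HasDerivAt (fun t : ℝ => (x : ℂ) + (t : ℂ) * Complex.I) (1 * Complex.I) y :=
    ((Complex.ofRealCLM.hasDerivAt (x := y)).mul_const Complex.I).const_add _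
  have hFx := HasDerivAt.comp (h₂ := fun ζ : ℂ => 1 / (ζ * H ζ)) x hF hlineX
  have hFy := HasDerivAt.comp (h₂ := fun ζ : ℂ => 1 / (ζ * H ζ)) y hF hlineY
  have hp := Complex.reCLM.hasFDerivAt.comp_hasDerivAt x hFx
  have hq := Complex.imCLM.hasFDerivAt.comp_hasDerivAt y hFy
  have hDx : HasDerivAt (fun t : ℝ => 1 + t ^ 2 + y ^ 2) (2 * x) x := by
    simpa using (((hasDerivAt_id x).pow 2).const_add 1).add_const (y ^ 2)
  have hDy : HasDerivAt (fun t : ℝ => 1 + x ^ 2 + t ^ 2) (2 * y) y := by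
    simpa using ((hasDerivAt_id y).pow 2).const_add (1 + x ^ 2)
  have hQ : deriv (fun t => betaQ H t y) x = _ := ((hp.const_mul (-2)).div hDx hD).deriv
  have hP : deriv (fun t => betaP H x t) y = _ := ((hq.const_mul (-2)).div hDy hD).deriv
  have hHF : 1 / H z = z * (1 / (z * H z)) := by field_simp
  have hre : (1 / H z).re = x * (1 / (z * H z)).re - y * (1 / (z * H z)).im := by
    rw [hHF, Complex.mul_re]
    simp [hz]
  rw [hQ, hP, hre]
  simp only [Function.comp_apply, ← hz, Complex.reCLM_apply, Complex.imCLM_apply, mul_one, one_mul,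
    Complex.mul_im, Complex.I_re, Complex.I_im, mul_zero, add_zero]
  generalize 1 / (z * H z) = w
  field_simp
  ring
end
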